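/- There exists a constant C > 0 such that for all δ ∈ (0,1], all ξ ≥ 1 and i ∈ {1,2}: Γ̂_i(ξ; δ) ≤ C·K_i^δ·ξ⁴. -/

import Mathlib

/-!
Put `d z = 1 + z - (λ_LSW - δ) z^(1/3)`. Since `a = 1 / d` and `b` is `1` plus the derivative of `d`, the exponent is an
explicit logarithm plus the integral of `1 / d`, so with `G z = ∫₀^z 1/d`

  `Γ̂_i(ξ) = d ξ * exp (G ξ) * ∫₀^ξ γ_i(z) (1 / d z) exp (-G z) dz`   (`gamHat_eq`).

For `z ≥ 1` the function `d` is bounded below by `z / 20`, uniformly in `δ`, and also by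
`5 z / 6 - 5 / 3`; together these give `1 / d z ≤ 2 / z + 100 / z²`. Hence `exp (G ξ - G 1) ≤ e¹⁰⁰ ξ²`, while `d ξ ≤ 2 ξ` and the part of the integral
over `[1, ξ]` is at most `20 ξ exp (-G 1)`. The constants `K_i` are bounded below by `1 / 40`,
because `d 1 ≥ 1 / 10` and `d ≤ 2` on `[0, 1]`; this lets the term coming from `[1, ξ]` be
absorbed in a multiple of `K_i`.
-/

open MeasureTheory Set Filter

/-- λ_LSW := 3 (1/2)^(2/3) -/
noncomputable def lamLSW : ℝ := 3 * (1/2 : ℝ) ^ ((2:ℝ)/3)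

/-- a_δ(z) := 1/(1 + z − (λ_LSW − δ) z^(1/3)) -/
noncomputable def aF (δ z : ℝ) : ℝ := 1 / (1 + z - (lamLSW - δ) * z ^ ((1:ℝ)/3))

/-- b_δ(z) := 2 − (1/3)(λ_LSW − δ) z^(−2/3) -/
noncomputable def bF (δ z : ℝ) : ℝ := 2 - (1/3) * (lamLSW - δ) * z ^ (-(2:ℝ)/3)

/-- ‖Φ‖_sup := sup_{0≤z≤1} |Φ(z)| -/
noncomputable def normSup (Φ : ℝ → ℝ) : ℝ := sSup ((fun z => |Φ z|) '' Icc (0:ℝ) 1)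

/-- ‖Φ‖_tail := sup_{z≥1} |Φ(z)| e^{β₁ z} z^{β₂} -/
noncomputable def normTail (β₁ β₂ : ℝ) (Φ : ℝ → ℝ) : ℝ :=
  sSup ((fun z => |Φ z| * Real.exp (β₁ * z) * z ^ β₂) '' Ici (1:ℝ))

/-- ‖Φ‖_Z := ‖Φ‖_sup + ‖Φ‖_tail -/
noncomputable def normZ (β₁ β₂ : ℝ) (Φ : ℝ → ℝ) : ℝ := normSup Φ + normTail β₁ β₂ Φ

/-- membership in the space Z: measurable with finite norm -/
def memZ (β₁ β₂ : ℝ) (Φ : ℝ → ℝ) : Prop :=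
  Measurable Φ ∧ BddAbove ((fun z => |Φ z|) '' Icc (0:ℝ) 1) ∧
    BddAbove ((fun z => |Φ z| * Real.exp (β₁ * z) * z ^ β₂) '' Ici (1:ℝ))

/-- (Φ₁ * Φ₂)(z) := (1/2) ∫₀^z Φ₁(z−y) Φ₂(y) dy -/
noncomputable def conv (Φ₁ Φ₂ : ℝ → ℝ) (z : ℝ) : ℝ :=
  (1/2) * ∫ y in (0:ℝ)..z, Φ₁ (z - y) * Φ₂ y

/-- unnormalized solution of the homogeneous ODE -/
noncomputable def psi0 (δ ε εt z : ℝ) : ℝ :=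
  Real.exp (-∫ y in (0:ℝ)..z, aF δ y * (bF δ y - εt * y - ε))

/-- ψ(z; ε, ε̃, δ), normalized so that ∫₀¹ z ψ dz = 1 -/
noncomputable def psi (δ ε εt z : ℝ) : ℝ :=
  psi0 δ ε εt z / ∫ t in (0:ℝ)..1, t * psi0 δ ε εt t

/-- the smooth LSW self-similar profile -/
noncomputable def PhiLSW (z : ℝ) : ℝ :=
  if z ≤ 1/2 then
    Real.exp (-∫ y in (0:ℝ)..z, aF 0 y * bF 0 y) /
      ∫ t in (0:ℝ)..(1/2 : ℝ), t * Real.exp (-∫ y in (0:ℝ)..t, aF 0 y * bF 0 y)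
  else 0

/-- ρ_δ(ξ) := ξ a_δ(ξ) exp(−∫_ξ^1 a_δ b_δ) -/
noncomputable def rhoF (δ ξ : ℝ) : ℝ :=
  ξ * aF δ ξ * Real.exp (-∫ y in ξ..(1:ℝ), aF δ y * bF δ y)

/-- R_δ[h] := ∫₀¹ ρ_δ(ξ) h(ξ) dξ -/
noncomputable def Rdel (δ : ℝ) (h : ℝ → ℝ) : ℝ := ∫ ξ in (0:ℝ)..1, rhoF δ ξ * h ξ

/-- R₀[h] := ∫_{1/2}^1 ξ a₀(ξ) h(ξ) exp(−∫_ξ^1 a₀ b₀) dξ -/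
noncomputable def Rzero (h : ℝ → ℝ) : ℝ :=
  ∫ ξ in (1/2 : ℝ)..1, ξ * aF 0 ξ * h ξ * Real.exp (-∫ y in ξ..(1:ℝ), aF 0 y * bF 0 y)

/-- γ₁(z) = z, γ₂(z) = 1 -/
noncomputable def gamF (i : ℕ) (z : ℝ) : ℝ := if i = 1 then z else 1

/-- Γ_i(ξ; ε, ε̃, δ) -/
noncomputable def Gam (i : ℕ) (δ ε εt ξ : ℝ) : ℝ :=
  ∫ z in (0:ℝ)..ξ, gamF i z * Real.exp (∫ y in z..ξ, aF δ y * (bF δ y - εt * y - ε))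

/-- Γ̂_i(ξ; δ) := Γ_i(ξ; 0, 0, δ) -/
noncomputable def GamHat (i : ℕ) (δ ξ : ℝ) : ℝ := Gam i δ 0 0 ξ

/-- K_i^δ := Γ̂_i(1; δ) -/
noncomputable def Kc (i : ℕ) (δ : ℝ) : ℝ := GamHat i δ 1

/-- Ĝ_i[h; δ] := ∫₀¹ ξ a_δ(ξ) h(ξ) Γ̂_i(ξ; δ) dξ -/
noncomputable def Ghat (i : ℕ) (δ : ℝ) (h : ℝ → ℝ) : ℝ :=
  ∫ ξ in (0:ℝ)..1, ξ * aF δ ξ * h ξ * GamHat i δ ξ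

/-- G_i[h; ε, ε̃, δ] := ∫₀^∞ ξ a_δ(ξ) h(ξ) Γ_i(ξ; ε, ε̃, δ) dξ -/
noncomputable def Gfull (i : ℕ) (δ ε εt : ℝ) (h : ℝ → ℝ) : ℝ :=
  ∫ ξ in Ioi (0:ℝ), ξ * aF δ ξ * h ξ * Gam i δ ε εt ξ

/-- The denominator of `aF δ`, extended evenly to negative arguments so that it is continuous and
positive on the whole line. -/
noncomputable def den (δ z : ℝ) : ℝ := 1 + |z| - (lamLSW - δ) * |z| ^ ((1:ℝ)/3)

/-- The primitive `∫₀^z 1 / den δ`. -/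
noncomputable def primG (δ z : ℝ) : ℝ := ∫ y in (0:ℝ)..z, (den δ y)⁻¹

theorem exists_lam_root : ∃ u : ℝ, 0 < u ∧ u ^ 3 = 1 / 2 ∧ lamLSW = 3 * u ^ 2 := by
  refine ⟨(1/2 : ℝ) ^ ((1:ℝ)/3), by positivity, ?_, ?_⟩
  · rw [← Real.rpow_natCast, ← Real.rpow_mul (by norm_num)]; norm_num
  · rw [lamLSW, ← Real.rpow_natCast, ← Real.rpow_mul (by norm_num)]; norm_num

theorem lam_le : lamLSW ≤ 1.9 := by
  obtain ⟨u, hu, h3, hl⟩ := exists_lam_root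
  have : u ≤ 0.795 := by
    by_contra! h
    have : (0.795 : ℝ) ^ 3 < u ^ 3 := by gcongr
    norm_num [h3] at this
  rw [hl]; nlinarith

theorem one_le_lam : 1 ≤ lamLSW := by
  obtain ⟨u, hu, h3, hl⟩ := exists_lam_root
  have : 0.7 ≤ u := by
    by_contra! h
    have : u ^ 3 < (0.7 : ℝ) ^ 3 := by gcongr
    norm_num [h3] at this
  rw [hl]; nlinarith

theorem cbrt_pow (z : ℝ) (hz : 0 ≤ z) : (z ^ ((1:ℝ)/3)) ^ 3 = z := by
  rw [← Real.rpow_natCast, ← Real.rpow_mul hz]; norm_num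

theorem den_of_nonneg (δ : ℝ) {z : ℝ} (hz : 0 ≤ z) :
    den δ z = 1 + z - (lamLSW - δ) * z ^ ((1:ℝ)/3) := by
  rw [den, abs_of_nonneg hz]

/-- With `u³ = 1/2` and `s = |z|^(1/3)`, one has `den δ z = (s - u)² (s + 2u) + δ s`. -/
theorem den_pos {δ : ℝ} (hδ : 0 < δ) (z : ℝ) : 0 < den δ z := by
  obtain ⟨u, hu, h3, hl⟩ := exists_lam_root
  have hs3 := cbrt_pow |z| (abs_nonneg z)
  have hs : 0 ≤ |z| ^ ((1:ℝ)/3) := by positivity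
  rw [den, hl]
  generalize |z| ^ ((1:ℝ)/3) = s at *
  rw [← hs3]
  rcases hs.eq_or_lt with h0 | hs
  · subst h0; norm_num
  · have : 0 ≤ (s - u) ^ 2 * (s + 2 * u) := by positivity
    nlinarith [mul_pos hδ hs]

theorem continuous_den (δ : ℝ) : Continuous (den δ) := by
  have : Continuous fun z : ℝ => |z| ^ ((1:ℝ)/3) :=
    continuous_abs.rpow_const fun _ => Or.inr (by norm_num)
  unfold den; fun_prop

theorem continuous_den_inv {δ : ℝ} (hδ : 0 < δ) : Continuous fun z => (den δ z)⁻¹ :=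
  (continuous_den δ).inv₀ fun z => (den_pos hδ z).ne'

theorem primG_sub {δ : ℝ} (hδ : 0 < δ) (x y : ℝ) :
    ∫ t in x..y, (den δ t)⁻¹ = primG δ y - primG δ x :=
  (intervalIntegral.integral_interval_sub_left
    ((continuous_den_inv hδ).intervalIntegrable _ _)
    ((continuous_den_inv hδ).intervalIntegrable _ _)).symm

theorem continuous_primG {δ : ℝ} (hδ : 0 < δ) : Continuous (primG δ) :=
  intervalIntegral.continuous_primitive
    (fun _ _ => (continuous_den_inv hδ).intervalIntegrable _ _) 0

theorem primG_mono {δ : ℝ} (hδ : 0 < δ) {x y : ℝ} (h : x ≤ y) : primG δ x ≤ primG δ y := by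
  rw [← sub_nonneg, ← primG_sub hδ]
  exact intervalIntegral.integral_nonneg h fun t _ => (inv_pos.2 (den_pos hδ t)).le

theorem hasDerivAt_den (δ : ℝ) {z : ℝ} (hz : 0 < z) :
    HasDerivAt (den δ) (bF δ z - 1) z := by
  have h1 := Real.hasDerivAt_rpow_const (x := z) (p := (1:ℝ)/3) (Or.inl hz.ne')
  have h2 := ((hasDerivAt_id z).const_add 1).sub (h1.const_mul (lamLSW - δ))
  have h3 : (1:ℝ)/3 - 1 = -2/3 := by norm_num
  rw [h3] at h2
  refine (h2.congr_of_eventuallyEq ?_).congr_deriv ?_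
  · filter_upwards [lt_mem_nhds hz] with y hy
    simp [den_of_nonneg δ hy.le]
  · rw [bF]; ring

/-- Since `a = 1 / den` and `b - 1` is the derivative of `den`, the integrand `a b` is the
logarithmic derivative of `den` plus `1 / den`. The zeros are the values of `ε` and `ε̃` in the definition of `GamHat`. -/
theorem hasDerivAt_primitive {δ : ℝ} (hδ : 0 < δ) {z : ℝ} (hz : 0 < z) :
    HasDerivAt (fun y => Real.log (den δ y) + primG δ y) (aF δ z * (bF δ z - 0 * z - 0)) z := by
  have h1 := (hasDerivAt_den δ hz).log (den_pos hδ z).ne'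
  have h2 : HasDerivAt (primG δ) (den δ z)⁻¹ z :=
    intervalIntegral.integral_hasDerivAt_right
      ((continuous_den_inv hδ).intervalIntegrable _ _)
      ((continuous_den_inv hδ).stronglyMeasurableAtFilter _ _)
      (continuous_den_inv hδ).continuousAt
  refine (h1.add h2).congr_deriv ?_
  rw [aF, ← den_of_nonneg δ hz.le]
  ring

/-- The exponential factors into a function of `ξ` and a function of `z`. Although `bF` is unbounded
near `0`, the right-hand side is continuous in `z` on the whole line. -/
theorem exp_integral {δ : ℝ} (hδ : 0 < δ) {z ξ : ℝ} (hz : 0 < z) (h : z ≤ ξ) :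
    Real.exp (∫ y in z..ξ, aF δ y * (bF δ y - 0 * y - 0)) =
      den δ ξ * Real.exp (primG δ ξ) * ((den δ z)⁻¹ * Real.exp (-primG δ z)) := by
  have hsub : ∀ y ∈ uIcc z ξ, 0 < y := fun y hy => by
    rw [uIcc_of_le h] at hy; exact hz.trans_le hy.1
  rw [intervalIntegral.integral_eq_sub_of_hasDerivAt
    (f := fun y => Real.log (den δ y) + primG δ y)
    (fun y hy => hasDerivAt_primitive hδ (hsub y hy))]
  · rw [Real.exp_sub, Real.exp_add, Real.exp_add, Real.exp_log (den_pos hδ _),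
      Real.exp_log (den_pos hδ _), Real.exp_neg]
    have := (den_pos hδ z).ne'
    field_simp
  · apply ContinuousOn.intervalIntegrable
    have hb : ContinuousOn (bF δ) (uIcc z ξ) := fun y hy => by
      have : ContinuousAt (fun y : ℝ => y ^ (-(2:ℝ)/3)) y :=
        Real.continuousAt_rpow_const _ _ (Or.inl (hsub y hy).ne')
      unfold bF
      exact (continuousAt_const.sub (continuousAt_const.mul this)).continuousWithinAt
    have ha : ContinuousOn (aF δ) (uIcc z ξ) :=
      (continuous_den_inv hδ).continuousOn.congr fun y hy => by
        simp only [aF, den_of_nonneg δ (hsub y hy).le, one_div]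
    exact ha.mul ((hb.sub (by fun_prop)).sub continuousOn_const)

theorem continuous_gamF (i : ℕ) : Continuous (gamF i) := by
  unfold gamF; split_ifs <;> fun_prop

theorem continuous_weight {δ : ℝ} (hδ : 0 < δ) (i : ℕ) :
    Continuous fun z => gamF i z * ((den δ z)⁻¹ * Real.exp (-primG δ z)) :=
  (continuous_gamF i).mul ((continuous_den_inv hδ).mul (continuous_primG hδ).neg.rexp)

theorem gamHat_eq {δ : ℝ} (hδ : 0 < δ) (i : ℕ) {ξ : ℝ} (hξ : 0 ≤ ξ) :
    GamHat i δ ξ = den δ ξ * Real.exp (primG δ ξ) *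
      ∫ z in (0:ℝ)..ξ, gamF i z * ((den δ z)⁻¹ * Real.exp (-primG δ z)) := by
  rw [GamHat, Gam, ← intervalIntegral.integral_const_mul]
  apply intervalIntegral.integral_congr_ae
  refine Eventually.of_forall fun z hz => ?_
  rw [uIoc_of_le hξ] at hz
  rw [exp_integral hδ hz.1 hz.2]
  ring

theorem den_le {δ : ℝ} (hδ : δ ≤ 1) {z : ℝ} (hz : 0 ≤ z) : den δ z ≤ 1 + z := by
  rw [den_of_nonneg δ hz]
  have : 0 ≤ (lamLSW - δ) * z ^ ((1:ℝ)/3) :=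
    mul_nonneg (by linarith [one_le_lam]) (by positivity)
  linarith

theorem den_one_ge {δ : ℝ} (hδ : 0 < δ) : 1 / 10 ≤ den δ 1 := by
  rw [den_of_nonneg δ zero_le_one, Real.one_rpow]
  linarith [lam_le]

theorem den_ge_lam {δ : ℝ} (hδ : 0 < δ) {z : ℝ} (hz : 0 ≤ z) :
    1 + z - 1.9 * z ^ ((1:ℝ)/3) ≤ den δ z := by
  rw [den_of_nonneg δ hz]
  have : 0 ≤ z ^ ((1:ℝ)/3) := by positivity
  nlinarith [lam_le]

theorem den_ge {δ : ℝ} (hδ : 0 < δ) {z : ℝ} (hz : 1 ≤ z) : z / 20 ≤ den δ z := by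
  have h := den_ge_lam hδ (zero_le_one.trans hz)
  have h3 := cbrt_pow z (zero_le_one.trans hz)
  have h1 : 1 ≤ z ^ ((1:ℝ)/3) := Real.one_le_rpow hz (by norm_num)
  generalize z ^ ((1:ℝ)/3) = s at *
  rw [← h3] at h ⊢
  -- `19/20 s³ - 1.9 s + 1` has positive coefficients as a polynomial in `s - 1`.
  nlinarith [mul_nonneg (sub_nonneg.2 h1) (sub_nonneg.2 h1),
    mul_nonneg (mul_nonneg (sub_nonneg.2 h1) (sub_nonneg.2 h1)) (sub_nonneg.2 h1)]

/-- The tangent line to the cube root at `8`, used to see that `den` grows almost like `z`. -/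
theorem den_ge_tangent {δ : ℝ} (hδ : 0 < δ) {z : ℝ} (hz : 1 ≤ z) :
    5 / 6 * z - 5 / 3 ≤ den δ z := by
  have h := den_ge_lam hδ (zero_le_one.trans hz)
  have h3 := cbrt_pow z (zero_le_one.trans hz)
  have h1 : 1 ≤ z ^ ((1:ℝ)/3) := Real.one_le_rpow hz (by norm_num)
  generalize z ^ ((1:ℝ)/3) = s at *
  rw [← h3] at h ⊢
  have : 0 ≤ (s - 2) ^ 2 * (s + 4) := by positivity
  nlinarith

theorem den_inv_le {δ : ℝ} (hδ : 0 < δ) {z : ℝ} (hz : 1 ≤ z) :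
    (den δ z)⁻¹ ≤ 2 * z⁻¹ + 100 * (z ^ 2)⁻¹ := by
  have hz0 : 0 < z := by linarith
  have h1 := den_ge hδ hz
  have h2 := den_ge_tangent hδ hz
  have hd := den_pos hδ z
  have e : 2 * z⁻¹ + 100 * (z ^ 2)⁻¹ = (2 * z + 100) / z ^ 2 := by field_simp
  rw [e, inv_eq_one_div, div_le_div_iff₀ hd (by positivity)]
  nlinarith

theorem primG_growth {δ : ℝ} (hδ : 0 < δ) {ξ : ℝ} (hξ : 1 ≤ ξ) :
    Real.exp (primG δ ξ - primG δ 1) ≤ Real.exp 100 * ξ ^ 2 := by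
  have hξ0 : 0 < ξ := by linarith
  have hsub : ∀ y ∈ uIcc 1 ξ, 0 < y := fun y hy => by
    rw [uIcc_of_le hξ] at hy; exact zero_lt_one.trans_le hy.1
  have hint : IntervalIntegrable (fun z : ℝ => 2 * z⁻¹ + 100 * (z ^ 2)⁻¹) volume 1 ξ := by
    apply ContinuousOn.intervalIntegrable
    have h1 : ContinuousOn (fun z : ℝ => z⁻¹) (uIcc 1 ξ) :=
      continuousOn_id.inv₀ fun y hy => (hsub y hy).ne'
    have h2 : ContinuousOn (fun z : ℝ => (z ^ 2)⁻¹) (uIcc 1 ξ) :=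
      (continuousOn_id.pow 2).inv₀ fun y hy => (pow_pos (hsub y hy) 2).ne'
    exact (continuousOn_const.mul h1).add (continuousOn_const.mul h2)
  have hval : ∫ z in (1:ℝ)..ξ, (2 * z⁻¹ + 100 * (z ^ 2)⁻¹) =
      (2 * Real.log ξ - 100 * ξ⁻¹) - (2 * Real.log 1 - 100 * 1⁻¹) := by
    refine intervalIntegral.integral_eq_sub_of_hasDerivAt
      (f := fun z => 2 * Real.log z - 100 * z⁻¹) (fun y hy => ?_) hint
    have hy := (hsub y hy).ne'
    refine (((Real.hasDerivAt_log hy).const_mul 2).sub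
      ((hasDerivAt_inv hy).const_mul 100)).congr_deriv ?_
    ring
  have hle : primG δ ξ - primG δ 1 ≤ 100 + 2 * Real.log ξ := by
    rw [← primG_sub hδ]
    refine (intervalIntegral.integral_mono_on hξ
      ((continuous_den_inv hδ).intervalIntegrable _ _) hint
      fun z hz => den_inv_le hδ hz.1).trans ?_
    rw [hval, Real.log_one]
    have : 0 < ξ⁻¹ := by positivity
    linarith
  calc Real.exp (primG δ ξ - primG δ 1) ≤ Real.exp (100 + 2 * Real.log ξ) :=
        Real.exp_le_exp.2 hle
    _ = Real.exp 100 * ξ ^ 2 := by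
        rw [Real.exp_add, two_mul, Real.exp_add, Real.exp_log hξ0]; ring

theorem gamF_nonneg (i : ℕ) {z : ℝ} (hz : 0 ≤ z) : 0 ≤ gamF i z := by
  unfold gamF; split_ifs <;> linarith

theorem gamF_le (i : ℕ) {z : ℝ} (hz : 1 ≤ z) : gamF i z ≤ z := by
  unfold gamF; split_ifs <;> linarith

theorem le_gamF (i : ℕ) {z : ℝ} (hz : z ≤ 1) : z ≤ gamF i z := by
  unfold gamF; split_ifs <;> linarith

/-- On `[0, 1]` the integrand of `Γ̂_i(1)` is at least `z / 20`, since `γ_i(z) ≥ z`,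
`den δ 1 ≥ 1 / 10`, `den δ z ≤ 2`, and the exponential factor is at least `1`. -/
theorem Kc_ge {δ : ℝ} (hδ : 0 < δ) (hδ1 : δ ≤ 1) (i : ℕ) : 1 / 40 ≤ Kc i δ := by
  rw [Kc, gamHat_eq hδ i zero_le_one, ← intervalIntegral.integral_const_mul]
  have h0 : ∫ z in (0:ℝ)..1, 1 / 20 * z = 1 / 40 := by
    rw [intervalIntegral.integral_const_mul, integral_id]; norm_num
  rw [← h0]
  refine intervalIntegral.integral_mono_on zero_le_one
    (Continuous.intervalIntegrable (by fun_prop) _ _)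
    ((continuous_const.mul (continuous_weight hδ i)).intervalIntegrable _ _) fun z hz => ?_
  have hd := den_pos hδ z
  have e1 : 1 / 2 ≤ (den δ z)⁻¹ := by
    rw [one_div]
    exact inv_anti₀ hd (by linarith [den_le hδ1 hz.1, hz.2])
  have e2 : 1 ≤ Real.exp (primG δ 1) * Real.exp (-primG δ z) := by
    rw [← Real.exp_add]
    exact Real.one_le_exp (by linarith [primG_mono hδ hz.2])
  calc 1 / 20 * z = (1 / 10 * z * (1 / 2)) * 1 := by ring
    _ ≤ (den δ 1 * gamF i z * (den δ z)⁻¹) * (Real.exp (primG δ 1) * Real.exp (-primG δ z)) := by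
      have := den_one_ge hδ
      have := le_gamF i hz.2
      have := hz.1
      have := gamF_nonneg i hz.1
      have := (den_pos hδ 1).le
      have := inv_pos.2 hd
      gcongr
    _ = _ := by ring

/-- On `[1, ξ]` the factors `γ_i ≤ z` and `1 / den ≤ 20 / z` cancel. -/
theorem tail_le {δ : ℝ} (hδ : 0 < δ) (i : ℕ) {ξ : ℝ} (hξ : 1 ≤ ξ) :
    ∫ z in (1:ℝ)..ξ, gamF i z * ((den δ z)⁻¹ * Real.exp (-primG δ z)) ≤
      20 * ξ * Real.exp (-primG δ 1) := by
  calc ∫ z in (1:ℝ)..ξ, gamF i z * ((den δ z)⁻¹ * Real.exp (-primG δ z))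
      ≤ ∫ _ in (1:ℝ)..ξ, 20 * Real.exp (-primG δ 1) := by
        refine intervalIntegral.integral_mono_on hξ
          ((continuous_weight hδ i).intervalIntegrable _ _)
          (continuous_const.intervalIntegrable _ _) fun z hz => ?_
        have hd := den_pos hδ z
        have e1 : gamF i z * (den δ z)⁻¹ ≤ 20 := by
          rw [← div_eq_mul_inv, div_le_iff₀ hd]
          linarith [gamF_le i hz.1, den_ge hδ hz.1]
        have e2 : Real.exp (-primG δ z) ≤ Real.exp (-primG δ 1) :=
          Real.exp_le_exp.2 (neg_le_neg (primG_mono hδ hz.1))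
        rw [← mul_assoc]
        gcongr
    _ ≤ 20 * ξ * Real.exp (-primG δ 1) := by
        rw [intervalIntegral.integral_const, smul_eq_mul]
        nlinarith [Real.exp_pos (-primG δ 1)]

/-- growth of Γ̂_i for ξ ≥ 1. -/
theorem stmt12 :
    ∃ C : ℝ, 0 < C ∧ ∀ δ ∈ Ioc (0:ℝ) 1, ∀ ξ : ℝ, 1 ≤ ξ →
      ∀ i ∈ ({1, 2} : Set ℕ), GamHat i δ ξ ≤ C * Kc i δ * ξ ^ 4 := by
  refine ⟨1620 * Real.exp 100, by positivity, ?_⟩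
  rintro δ ⟨hδ, hδ1⟩ ξ hξ i -
  have hK := Kc_ge hδ hδ1 i
  have hξ0 : 0 ≤ ξ := zero_le_one.trans hξ
  have hKeq : Kc i δ = _ := gamHat_eq hδ i zero_le_one
  have hint := fun x y => (continuous_weight hδ i).intervalIntegrable (μ := volume) x y
  have htail := tail_le hδ i hξ
  rw [gamHat_eq hδ i hξ0, ← intervalIntegral.integral_add_adjacent_intervals (hint 0 1) (hint 1 ξ)]
  set I := ∫ z in (0:ℝ)..1, gamF i z * ((den δ z)⁻¹ * Real.exp (-primG δ z))
  set J := ∫ z in (1:ℝ)..ξ, gamF i z * ((den δ z)⁻¹ * Real.exp (-primG δ z))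
  have hd1 := den_one_ge hδ
  -- Multiplying by `exp (G 1)` turns `I` into `Kc i δ / den δ 1` and normalises the tail `J`.
  have hsplit : Real.exp (primG δ ξ) =
      Real.exp (primG δ ξ - primG δ 1) * Real.exp (primG δ 1) := by
    rw [← Real.exp_add]; congr 1; ring
  have hI : Real.exp (primG δ 1) * I ≤ 10 * Kc i δ := by
    have hpos : 0 ≤ Real.exp (primG δ 1) * I := by
      by_contra! h
      nlinarith [mul_neg_of_pos_of_neg (den_pos hδ 1) h]
    nlinarith
  have hJ : Real.exp (primG δ 1) * J ≤ 800 * Kc i δ * ξ := by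
    calc Real.exp (primG δ 1) * J
        ≤ Real.exp (primG δ 1) * (20 * ξ * Real.exp (-primG δ 1)) := by gcongr
      _ = 20 * ξ * (Real.exp (primG δ 1) * Real.exp (-primG δ 1)) := by ring
      _ = 20 * ξ := by rw [← Real.exp_add, add_neg_cancel, Real.exp_zero, mul_one]
      _ ≤ 800 * Kc i δ * ξ := by nlinarith
  have hIJ : Real.exp (primG δ 1) * (I + J) ≤ 810 * Kc i δ * ξ := by
    nlinarith
  have hdξ : den δ ξ ≤ 2 * ξ := by linarith [den_le hδ1 hξ0]
  have hgrow := primG_growth hδ hξ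
  have hdpos := den_pos hδ ξ
  calc den δ ξ * Real.exp (primG δ ξ) * (I + J)
      = den δ ξ * Real.exp (primG δ ξ - primG δ 1) * (Real.exp (primG δ 1) * (I + J)) := by
        rw [hsplit]; ring
    _ ≤ den δ ξ * Real.exp (primG δ ξ - primG δ 1) * (810 * Kc i δ * ξ) := by gcongr
    _ ≤ 2 * ξ * (Real.exp 100 * ξ ^ 2) * (810 * Kc i δ * ξ) := by
        have : 0 ≤ Kc i δ := by linarith
        gcongr
    _ = 1620 * Real.exp 100 * Kc i δ * ξ ^ 4 := by ring
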